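/- arXiv:1905.10973 — 5 statements merged into one kernel-verified Lean document; each statement's English description precedes it below -/
import Mathlib

section
/- Let a, b, c be nonnegative integers with a+1 ≥ b, a+1 ≥ c, b+1 ≥ c and c ≥ 1. Then H_comb(a,b,c) = H_comb(a+2,b+2,c−2) + (qt)^c · h₂(a+c, b−c) + (qt)^{c−1} · h₂(a+c, b−c+2) + ∑_{ℓ=2}^{min(2c, a−b)} q^{a+2c−ℓ} t^{ℓ+b} − [a = b−1]·q^{a+2c} t^{b} − ([a = b] + [a = b−1])·q^{a+2c−1} t^{b+1}, where [P] equals 1 if the condition P holds and 0 otherwise, and a sum over an empty range of integers is zero. -/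
open Finset

noncomputable section

/-- The field `ℚ(q,t)` of rational functions in two variables over `ℚ`. -/
abbrev K : Type := FractionRing (MvPolynomial (Fin 2) ℚ)

/-- The variable `q` in `ℚ(q,t)`. -/
def q : K := algebraMap (MvPolynomial (Fin 2) ℚ) K (MvPolynomial.X 0)

/-- The variable `t` in `ℚ(q,t)`. -/
def t : K := algebraMap (MvPolynomial (Fin 2) ℚ) K (MvPolynomial.X 1)

/-- The quasihead index set
`Q̃(a,b,c) = {(i,j) : 0 ≤ j ≤ c, j ≤ i ≤ b+c, 2i+2j ≤ a+b+2c−m_{cj}}`,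
where `m_{cj} = (c − j) mod 2`. -/
def Qtilde (a b c : ℤ) : Finset (ℤ × ℤ) :=
  (Finset.Icc 0 (b + c) ×ˢ Finset.Icc 0 c).filter
    (fun p => p.2 ≤ p.1 ∧ 2 * p.1 + 2 * p.2 ≤ a + b + 2 * c - (c - p.2) % 2)

/-- `H_comb(a,b,c) = ∑_{(i,j) ∈ Q̃(a,b,c)} q^{A−2i−j} t^{i+ε_{ij}}`, with
`A = a+2b+3c` and `ε_{ij} = max(0, i+j−b−c)`. -/
def Hcomb (a b c : ℤ) : K :=
  ∑ p ∈ Qtilde a b c,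
    q ^ (a + 2 * b + 3 * c - 2 * p.1 - p.2) * t ^ (p.1 + max 0 (p.1 + p.2 - b - c))

/-- `h₂(a,b) = q^a ∑_{i=0}^{b} q^{2(b−i)} t^i` (zero for `b = −1`). -/
def h₂ (a b : ℤ) : K :=
  q ^ a * ∑ i ∈ Finset.Icc (0 : ℤ) b, q ^ (2 * (b - i)) * t ^ i

/-!
The exponents of the summand at `(i, j)` depend on `(a, b, c)` only through `a + 2b + 3c` and
`b + c`, which `(a, b, c) ↦ (a + 2, b + 2, c - 2)` preserves; the endpoints of each row of
`Q̃` are unchanged too. This substitution therefore just deletes the rows `j = c` and `j = c - 1`.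

If row `j` ran exactly up to `i = b + c - j`, where `ε` is still zero, it would equal
`(qt)^j h₂(a + c, b + c - 2j)`. Beyond that point the summands are `q^(a+2c-l) t^(b+l)` with
`l = 2i - 2b - c + j`, so the excess of the rows `c` and `c - 1` supplies respectively the even and
the odd values of `l`. When one of these two rows stops before `i = b + c - j`, it lacks only that
last summand, and this gives the indicator corrections.
-/

theorem q_ne_zero : q ≠ 0 := by
  simp [q, MvPolynomial.X_ne_zero]

theorem t_ne_zero : t ≠ 0 := by
  simp [t, MvPolynomial.X_ne_zero]

section IntervalSums

variable {α M : Type*} [LinearOrder α] [LocallyFiniteOrder α] [AddCommMonoid M]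

theorem sum_Ico_add_sum_Ico_comm (f : α → M) {x y z : α} (hxy : x ≤ y) (hxz : x ≤ z) :
    ∑ i ∈ Ico x y, f i + ∑ i ∈ Ico y z, f i = ∑ i ∈ Ico x z, f i + ∑ i ∈ Ico z y, f i := by
  wlog hyz : y ≤ z generalizing y z
  · exact (this hxz hxy (le_of_not_ge hyz)).symm
  rw [Ico_eq_empty_of_le hyz, sum_empty, add_zero,
    ← sum_union (Ico_disjoint_Ico_consecutive x y z), Ico_union_Ico_eq_Ico hxy hyz]

theorem sum_Icc_eq_sum_Icc_sub_one_add [One α] [Sub α] [PredSubOrder α] [NoMinOrder α] (f : α → M)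
    {x y : α} (hxy : x ≤ y) : ∑ i ∈ Icc x y, f i = ∑ i ∈ Icc x (y - 1), f i + f y := by
  rw [← insert_Icc_sub_one_right_eq_Icc hxy, sum_insert (by simp), add_comm]

end IntervalSums

/-- The summand `q^{A−2i−j} t^{i+ε_{ij}}` of `Hcomb a b c` at `(i, j)`. -/
def weight (a b c i j : ℤ) : K :=
  q ^ (a + 2 * b + 3 * c - 2 * i - j) * t ^ (i + max 0 (i + j - b - c))

/-- The last `i` allowed in row `j` of `Qtilde a b c`; the row is empty if this is less than `j`. -/
def rowEnd (a b c j : ℤ) : ℤ :=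
  min (b + c) ((a + b + 2 * c - (c - j) % 2) / 2 - j)

/-- The contribution of row `j` of `Qtilde a b c` to `Hcomb a b c`. -/
def rowSum (a b c j : ℤ) : K :=
  ∑ i ∈ Icc j (rowEnd a b c j), weight a b c i j

theorem mem_Qtilde_iff_mem_row (a b c : ℤ) (p : ℤ × ℤ) :
    p ∈ Qtilde a b c ↔ p.2 ∈ Icc 0 c ∧ p.1 ∈ Icc p.2 (rowEnd a b c p.2) := by
  simp only [Qtilde, rowEnd, mem_filter, mem_product, mem_Icc]
  omega

theorem Hcomb_eq_sum_rowSum (a b c : ℤ) : Hcomb a b c = ∑ j ∈ Icc 0 c, rowSum a b c j :=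
  sum_finset_product_right _ _ (fun j ↦ Icc j (rowEnd a b c j)) (mem_Qtilde_iff_mem_row a b c)

theorem weight_shift (a b c i j : ℤ) : weight (a + 2) (b + 2) (c - 2) i j = weight a b c i j := by
  unfold weight
  ring_nf

theorem rowEnd_shift (a b c j : ℤ) : rowEnd (a + 2) (b + 2) (c - 2) j = rowEnd a b c j := by
  unfold rowEnd
  omega

theorem rowSum_shift (a b c j : ℤ) : rowSum (a + 2) (b + 2) (c - 2) j = rowSum a b c j := by
  simp only [rowSum, rowEnd_shift, weight_shift]

theorem Hcomb_eq_shift_add_rowSum (a b : ℤ) {c : ℤ} (hc : 1 ≤ c) :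
    Hcomb a b c = Hcomb (a + 2) (b + 2) (c - 2) + rowSum a b c (c - 1) + rowSum a b c c := by
  simp only [Hcomb_eq_sum_rowSum, rowSum_shift]
  rw [sum_Icc_eq_sum_Icc_sub_one_add _ (by lia : 0 ≤ c),
    sum_Icc_eq_sum_Icc_sub_one_add _ (by lia : 0 ≤ c - 1), sub_sub, one_add_one_eq_two]

theorem weight_of_add_le {a b c i j : ℤ} (h : i + j ≤ b + c) :
    weight a b c i j = q ^ (a + 2 * b + 3 * c - 2 * i - j) * t ^ i := by
  rw [weight, max_eq_left (by lia), add_zero]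

theorem weight_of_le_add {a b c i j : ℤ} (h : b + c ≤ i + j) :
    weight a b c i j = q ^ (a + 2 * b + 3 * c - 2 * i - j) * t ^ (2 * i + j - b - c) := by
  rw [weight, max_eq_right (by lia)]
  ring_nf

theorem qt_zpow_mul_h₂ (a n m : ℤ) :
    (q * t) ^ n * h₂ a m = ∑ i ∈ Icc n (n + m), q ^ (a + 2 * m + 3 * n - 2 * i) * t ^ i := by
  have reindex : Icc n (n + m) = (Icc 0 m).map (addLeftEmbedding n) := by
    rw [map_add_left_Icc, add_zero]
  rw [h₂, ← mul_assoc, mul_sum, reindex, sum_map]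
  refine sum_congr rfl fun i _ ↦ ?_
  rw [addLeftEmbedding_apply,
    show a + 2 * m + 3 * n - 2 * (n + i) = n + a + 2 * (m - i) by ring,
    zpow_add₀ q_ne_zero, zpow_add₀ q_ne_zero, zpow_add₀ t_ne_zero, mul_zpow]
  ring

theorem sum_weight_head (a b c j : ℤ) :
    ∑ i ∈ Icc j (b + c - j), weight a b c i j = (q * t) ^ j * h₂ (a + c) (b + c - 2 * j) := by
  rw [qt_zpow_mul_h₂, show j + (b + c - 2 * j) = b + c - j by ring]
  refine sum_congr rfl fun i hi ↦ ?_
  rw [weight_of_add_le (by linarith [(mem_Icc.mp hi).2])]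
  ring_nf

theorem sum_weight_tail (a b : ℤ) {c j : ℤ} (hj : j = c ∨ j = c - 1) :
    ∑ i ∈ Icc (b + c - j + 1) (rowEnd a b c j), weight a b c i j
      = ∑ l ∈ Icc 2 (min (2 * c) (a - b)) with l % 2 = c - j,
          q ^ (a + 2 * c - l) * t ^ (l + b) := by
  refine sum_nbij' (fun i ↦ 2 * i - 2 * b - c + j) (fun l ↦ (l + 2 * b + c - j) / 2) ?_ ?_ ?_ ?_ ?_
  · intro i
    simp only [rowEnd, mem_filter, mem_Icc]
    omega
  · intro l
    simp only [rowEnd, mem_filter, mem_Icc]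
    omega
  · intro i _
    omega
  · intro l
    simp only [mem_filter]
    omega
  · intro i hi
    rw [weight_of_le_add (by linarith [(mem_Icc.mp hi).1])]
    ring_nf

theorem sum_weight_gap {a b c j : ℤ} (hj : j = c ∨ j = c - 1) (hc : 1 ≤ c) (hab : b ≤ a + 1) :
    ∑ i ∈ Icc (rowEnd a b c j + 1) (b + c - j), weight a b c i j
      = if a < b + c - j then q ^ (a + c + j) * t ^ (b + c - j) else 0 := by
  split_ifs with hgap
  · have hend : rowEnd a b c j + 1 = b + c - j := by
      unfold rowEnd
      omega
    rw [hend, Icc_self, sum_singleton, weight_of_add_le (by lia)]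
    ring_nf
  · have hend : b + c - j < rowEnd a b c j + 1 := by
      unfold rowEnd
      omega
    rw [Icc_eq_empty_of_lt hend, sum_empty]

theorem rowSum_eq_h₂_add_tail_sub_gap {a b c j : ℤ} (hj : j = c ∨ j = c - 1) (hc : 1 ≤ c)
    (hab : b ≤ a + 1) (hac : c ≤ a + 1) (hbc : c ≤ b + 1) :
    rowSum a b c j
      = (q * t) ^ j * h₂ (a + c) (b + c - 2 * j)
        + (∑ l ∈ Icc 2 (min (2 * c) (a - b)) with l % 2 = c - j,
            q ^ (a + 2 * c - l) * t ^ (l + b))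
        - if a < b + c - j then q ^ (a + c + j) * t ^ (b + c - j) else 0 := by
  have hhead : j ≤ b + c - j + 1 := by lia
  have hrow : j ≤ rowEnd a b c j + 1 := by
    unfold rowEnd
    omega
  rw [← sum_weight_head, ← sum_weight_tail a b hj, ← sum_weight_gap hj hc hab, rowSum,
    eq_sub_iff_add_eq]
  simpa only [Ico_add_one_right_eq_Icc] using
    (sum_Ico_add_sum_Ico_comm (weight a b c · j) hhead hrow).symm

theorem rowSum_self {a b c : ℤ} (hc : 1 ≤ c) (hab : b ≤ a + 1) (hac : c ≤ a + 1)
    (hbc : c ≤ b + 1) :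
    rowSum a b c c
      = (q * t) ^ c * h₂ (a + c) (b - c)
        + (∑ l ∈ Icc 2 (min (2 * c) (a - b)) with l % 2 = 0, q ^ (a + 2 * c - l) * t ^ (l + b))
        - (if a = b - 1 then 1 else 0) * (q ^ (a + 2 * c) * t ^ b) := by
  have hgap : a < b ↔ a = b - 1 := by lia
  rw [rowSum_eq_h₂_add_tail_sub_gap (.inl rfl) hc hab hac hbc, sub_self, add_sub_cancel_right,
    show b + c - 2 * c = b - c by ring, show a + c + c = a + 2 * c by ring, ite_mul, one_mul,
    zero_mul]
  simp only [hgap]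

theorem rowSum_sub_one {a b c : ℤ} (hc : 1 ≤ c) (hab : b ≤ a + 1) (hac : c ≤ a + 1)
    (hbc : c ≤ b + 1) :
    rowSum a b c (c - 1)
      = (q * t) ^ (c - 1) * h₂ (a + c) (b - c + 2)
        + (∑ l ∈ Icc 2 (min (2 * c) (a - b)) with l % 2 = 1, q ^ (a + 2 * c - l) * t ^ (l + b))
        - ((if a = b then 1 else 0) + (if a = b - 1 then 1 else 0))
            * (q ^ (a + 2 * c - 1) * t ^ (b + 1)) := by
  have hgap : (if a < b + 1 then (1 : K) else 0)
      = (if a = b then 1 else 0) + if a = b - 1 then 1 else 0 := by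
    split_ifs <;> first | lia | simp
  rw [rowSum_eq_h₂_add_tail_sub_gap (.inr rfl) hc hab hac hbc, sub_sub_cancel,
    show b + c - 2 * (c - 1) = b - c + 2 by ring, show b + c - (c - 1) = b + 1 by ring,
    show a + c + (c - 1) = a + 2 * c - 1 by ring, ← hgap, ite_mul, one_mul, zero_mul]

theorem Hcomb_recursion (a b c : ℤ) (ha : 0 ≤ a) (hb : 0 ≤ b) (hc : 1 ≤ c)
    (hab : b ≤ a + 1) (hac : c ≤ a + 1) (hbc : c ≤ b + 1) :
    Hcomb a b c
      = Hcomb (a + 2) (b + 2) (c - 2)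
        + (q * t) ^ c * h₂ (a + c) (b - c)
        + (q * t) ^ (c - 1) * h₂ (a + c) (b - c + 2)
        + (∑ l ∈ Finset.Icc (2 : ℤ) (min (2 * c) (a - b)),
            q ^ (a + 2 * c - l) * t ^ (l + b))
        - (if a = b - 1 then (1 : K) else 0) * (q ^ (a + 2 * c) * t ^ b)
        - ((if a = b then (1 : K) else 0) + (if a = b - 1 then (1 : K) else 0))
            * (q ^ (a + 2 * c - 1) * t ^ (b + 1)) := by
  have parity := sum_filter_add_sum_filter_not (Icc 2 (min (2 * c) (a - b))) (· % 2 = 0)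
    fun l ↦ q ^ (a + 2 * c - l) * t ^ (l + b)
  simp only [Int.emod_two_ne_zero] at parity
  rw [Hcomb_eq_shift_add_rowSum a b hc, rowSum_self hc hab hac hbc, rowSum_sub_one hc hab hac hbc,
    ← parity]
  ring
end
end

section
/- For all integers a, b and every integer c ≥ 0, the identity H₃(a,b,c) = H₃(a+1, b+1, c−1) + (qt)^c · H₂(a+c, b−c) + ∑_{i=0}^{c−1} (qt)^{b+2c−2i} · q^{a−b−2c+4i} holds in the field ℚ(q,t). -/
open Finset

noncomputable section

/-- `H₂(a,b)` as a function of the two variables `x`, `y` (so that interchanging the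
arguments interchanges `q` and `t`):
`H₂(a,b;x,y) = x^{a+2b}/(1 − y/x²) + x^a y^b/(1 − x²/y)`. -/
def H₂ (a b : ℤ) (x y : K) : K :=
  x ^ (a + 2 * b) / (1 - y / x ^ 2) + x ^ a * y ^ b / (1 - x ^ 2 / y)

/-- `H₃(a,b,c;x,y)`, the head-like standard-tableau expansion for `n = 4`. -/
def H₃ (a b c : ℤ) (x y : K) : K :=
  x ^ (a + 2 * b + 3 * c) / ((1 - y / x ^ 2) * (1 - y / x ^ 3))
    + x ^ (a + 2 * b) * y ^ c / ((1 - y / x ^ 2) * (1 - x ^ 3 / y))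
    + x ^ (a + 2 * c) * y ^ b * (1 - y) / ((1 - y ^ 2 / x ^ 2) * (1 - x ^ 2 / y) * (1 - y / x))
    + x ^ a * y ^ (b + 2 * c) / ((1 - x ^ 2 / y ^ 2) * (1 - x / y))
    + x ^ (a + c) * y ^ (b + c) * (1 - x) / ((1 - x ^ 2 / y) * (1 - x / y) * (1 - y / x))

/-- `F₁(m) = (q^{m+1} − t^{m+1})/(q − t)`, the function `F(a)` of the paper. -/
def F₁ (m : ℤ) : K := (q ^ (m + 1) - t ^ (m + 1)) / (q - t)

/-- `F₂(a,b) = H₂(a,b;q,t)/(1 − t/q) + H₂(a,b;t,q)/(1 − q/t)`. -/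
def F₂ (a b : ℤ) : K := H₂ a b q t / (1 - t / q) + H₂ a b t q / (1 - q / t)

/-- `F₃(a,b,c) = H₃(a,b,c;q,t)/(1 − t/q) + H₃(a,b,c;t,q)/(1 − q/t)`. -/
def F₃ (a b c : ℤ) : K := H₃ a b c q t / (1 - t / q) + H₃ a b c t q / (1 - q / t)

/-!
Under the shift `(a, b, c) ↦ (a + 1, b + 1, c - 1)` the first and last terms of `H₃` are invariant,
and each of the other three is multiplied by a ratio `r` for which `1 - r` is the last factor of its
denominator, so that factor cancels in the difference. A partial fraction decomposition rewrites
what remains as the two terms of `(x y)^c H₂(a + c, b - c)` plus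
`x^a y^b (y^{2c} - x^{2c}) / (1 - x²/y²)`, which is a geometric sum of ratio `x²/y²`.
-/

section Field

variable {F : Type*} [Field F] {x y : F}

theorem div_mul_one_sub_sub_mul_div_mul_one_sub (u d : F) {r : F} (hr : r ≠ 1) :
    u / (d * (1 - r)) - u * r / (d * (1 - r)) = u / d := by
  rw [← sub_div, ← mul_one_sub, mul_div_mul_right _ _ (sub_ne_zero.mpr hr.symm)]

theorem one_sub_mul_div_mul_one_sub {u w : F} (hu₀ : u ≠ 0) (hu : u ≠ 1) (hw : w ≠ 1) :
    (1 - u * w) / ((1 - u) * (1 - w)) = 1 / (1 - w) - 1 / (1 - u⁻¹) := by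
  have hu' : 1 - u ≠ 0 := sub_ne_zero.mpr hu.symm
  have hw' : 1 - w ≠ 0 := sub_ne_zero.mpr hw.symm
  have h_inv : 1 / (1 - u⁻¹) = -(u / (1 - u)) := by
    rw [← mul_div_mul_left 1 (1 - u⁻¹) hu₀, mul_one_sub, mul_inv_cancel₀ hu₀, mul_one,
      ← neg_sub 1 u, div_neg]
  rw [h_inv]
  field_simp
  ring

theorem zpow_add_mul_zpow_sub (hx : x ≠ 0) (hy : y ≠ 0) (m n j k : ℤ) :
    x ^ (m + j) * y ^ (n - k) = x ^ m * y ^ n * (x ^ j / y ^ k) := by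
  rw [zpow_add₀ hx, zpow_sub₀ hy]
  ring

theorem mul_zpow_mul_zpow_mul_zpow (hx : x ≠ 0) (hy : y ≠ 0) (k m n : ℤ) :
    (x * y) ^ k * (x ^ m * y ^ n) = x ^ (m + k) * y ^ (n + k) := by
  rw [mul_zpow, zpow_add₀ hx, zpow_add₀ hy]
  ring

theorem geom_sum_Icc_int {r : F} (hr : r ≠ 1) {c : ℤ} (hc : 0 ≤ c) :
    ∑ i ∈ Icc 0 (c - 1), r ^ i = (1 - r ^ c) / (1 - r) := by
  lift c to ℕ using hc
  have h_Icc : Icc (0 : ℤ) (c - 1) = (range c).map Nat.castEmbedding := by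
    ext i
    simp only [mem_Icc, mem_map, mem_range, Nat.castEmbedding_apply]
    exact ⟨fun _ ↦ ⟨i.toNat, by omega, by omega⟩, fun ⟨_, _, _⟩ ↦ by omega⟩
  simp only [h_Icc, sum_map, Nat.castEmbedding_apply, zpow_natCast, geom_sum_eq hr]
  rw [← neg_sub 1 r, ← neg_sub 1 (r ^ c), neg_div_neg_eq]

theorem sum_Icc_mul_zpow_mul_zpow (hx : x ≠ 0) (hy : y ≠ 0) (hxy : x ^ 2 ≠ y ^ 2)
    (a b : ℤ) {c : ℤ} (hc : 0 ≤ c) :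
    ∑ i ∈ Icc 0 (c - 1), (x * y) ^ (b + 2 * c - 2 * i) * x ^ (a - b - 2 * c + 4 * i)
      = (x ^ a * y ^ (b + 2 * c) - x ^ (a + 2 * c) * y ^ b) / (1 - x ^ 2 / y ^ 2) := by
  have h_ratio (i : ℤ) : x ^ a * y ^ (b + 2 * c) * (x ^ 2 / y ^ 2) ^ i
      = x ^ (a + 2 * i) * y ^ (b + 2 * c - 2 * i) := by
    rw [zpow_add_mul_zpow_sub hx hy, zpow_mul, zpow_mul, ← div_zpow]
    norm_cast
  have h_term (i : ℤ) : (x * y) ^ (b + 2 * c - 2 * i) * x ^ (a - b - 2 * c + 4 * i)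
      = x ^ a * y ^ (b + 2 * c) * (x ^ 2 / y ^ 2) ^ i := by
    rw [h_ratio, mul_zpow, mul_right_comm, ← zpow_add₀ hx]
    ring_nf
  have h_ne : x ^ 2 / y ^ 2 ≠ 1 := mt eq_of_div_eq_one hxy
  simp only [h_term, ← mul_sum]
  rw [geom_sum_Icc_int h_ne hc, ← mul_div_assoc, mul_one_sub, h_ratio, add_sub_cancel_right]

end Field

section Shift

variable {x y : K}

theorem mul_zpow_mul_H₂ (hx : x ≠ 0) (hy : y ≠ 0) (a b k : ℤ) :
    (x * y) ^ k * H₂ a b x y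
      = x ^ (a + 2 * b + k) * y ^ k / (1 - y / x ^ 2)
        + x ^ (a + k) * y ^ (b + k) / (1 - x ^ 2 / y) := by
  have h_fst : (x * y) ^ k * x ^ (a + 2 * b) = x ^ (a + 2 * b + k) * y ^ k := by
    simpa using mul_zpow_mul_zpow_mul_zpow hx hy k (a + 2 * b) 0
  rw [H₂, mul_add, ← mul_div_assoc, ← mul_div_assoc, h_fst, mul_zpow_mul_zpow_mul_zpow hx hy]

theorem H₃_shift (hx : x ≠ 0) (hy : y ≠ 0) (a b c : ℤ) :
    H₃ (a + 1) (b + 1) (c - 1) x y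
      = x ^ (a + 2 * b + 3 * c) / ((1 - y / x ^ 2) * (1 - y / x ^ 3))
        + x ^ (a + 2 * b) * y ^ c * (x ^ 3 / y) / ((1 - y / x ^ 2) * (1 - x ^ 3 / y))
        + x ^ (a + 2 * c) * y ^ b * (1 - y) * (y / x)
          / ((1 - y ^ 2 / x ^ 2) * (1 - x ^ 2 / y) * (1 - y / x))
        + x ^ a * y ^ (b + 2 * c) * (x / y) / ((1 - x ^ 2 / y ^ 2) * (1 - x / y))
        + x ^ (a + c) * y ^ (b + c) * (1 - x)
          / ((1 - x ^ 2 / y) * (1 - x / y) * (1 - y / x)) := by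
  have shift₁ : a + 1 + 2 * (b + 1) + 3 * (c - 1) = a + 2 * b + 3 * c := by ring
  have shift₂ : x ^ (a + 1 + 2 * (b + 1)) * y ^ (c - 1)
      = x ^ (a + 2 * b) * y ^ c * (x ^ 3 / y) := by
    convert zpow_add_mul_zpow_sub hx hy (a + 2 * b) c 3 1 using 2
    · ring_nf
    · rw [zpow_ofNat, zpow_one]
  have shift₃ : x ^ (a + 1 + 2 * (c - 1)) * y ^ (b + 1) * (1 - y)
      = x ^ (a + 2 * c) * y ^ b * (1 - y) * (y / x) := by
    have h := zpow_add_mul_zpow_sub hy hx b (a + 2 * c) 1 1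
    rw [zpow_one, zpow_one] at h
    rw [show a + 1 + 2 * (c - 1) = a + 2 * c - 1 by ring, mul_comm (x ^ _), h]
    ring
  have shift₄ : x ^ (a + 1) * y ^ (b + 1 + 2 * (c - 1))
      = x ^ a * y ^ (b + 2 * c) * (x / y) := by
    convert zpow_add_mul_zpow_sub hx hy a (b + 2 * c) 1 1 using 2
    · ring_nf
    · simp
  have shift₅ : x ^ (a + 1 + (c - 1)) * y ^ (b + 1 + (c - 1)) = x ^ (a + c) * y ^ (b + c) := by
    ring_nf
  rw [H₃, shift₁, shift₂, shift₃, shift₄, shift₅]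

theorem H₃_sub_H₃_shift (hx : x ≠ 0) (hy : y ≠ 0) (h₁ : x ≠ y) (h₃ : x ^ 3 ≠ y) (a b c : ℤ) :
    H₃ a b c x y - H₃ (a + 1) (b + 1) (c - 1) x y
      = x ^ (a + 2 * b) * y ^ c / (1 - y / x ^ 2)
        + x ^ (a + 2 * c) * y ^ b * (1 - y) / ((1 - y ^ 2 / x ^ 2) * (1 - x ^ 2 / y))
        + x ^ a * y ^ (b + 2 * c) / (1 - x ^ 2 / y ^ 2) := by
  have diff₂ := div_mul_one_sub_sub_mul_div_mul_one_sub
    (x ^ (a + 2 * b) * y ^ c) (1 - y / x ^ 2) (mt eq_of_div_eq_one h₃)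
  have diff₃ := div_mul_one_sub_sub_mul_div_mul_one_sub
    (x ^ (a + 2 * c) * y ^ b * (1 - y)) ((1 - y ^ 2 / x ^ 2) * (1 - x ^ 2 / y))
    (mt eq_of_div_eq_one h₁.symm)
  have diff₄ := div_mul_one_sub_sub_mul_div_mul_one_sub
    (x ^ a * y ^ (b + 2 * c)) (1 - x ^ 2 / y ^ 2) (mt eq_of_div_eq_one h₁)
  rw [H₃, H₃_shift hx hy]
  linear_combination diff₂ + diff₃ + diff₄

theorem H₃_eq_H₃_shift_add (hx : x ≠ 0) (hy : y ≠ 0) (hxy : x ^ 2 ≠ y ^ 2) (h₂ : x ^ 2 ≠ y)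
    (h₃ : x ^ 3 ≠ y) (a b c : ℤ) :
    H₃ a b c x y
      = H₃ (a + 1) (b + 1) (c - 1) x y
        + (x * y) ^ c * H₂ (a + c) (b - c) x y
        + (x ^ a * y ^ (b + 2 * c) - x ^ (a + 2 * c) * y ^ b) / (1 - x ^ 2 / y ^ 2) := by
  have h_shift := H₃_sub_H₃_shift hx hy (ne_of_apply_ne (· ^ 2) hxy) h₃ a b c
  have h_H₂ : (x * y) ^ c * H₂ (a + c) (b - c) x y
      = x ^ (a + 2 * b) * y ^ c / (1 - y / x ^ 2)
        + x ^ (a + 2 * c) * y ^ b / (1 - x ^ 2 / y) := by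
    rw [mul_zpow_mul_H₂ hx hy]
    ring_nf
  have h_frac : (1 - y) / ((1 - y ^ 2 / x ^ 2) * (1 - x ^ 2 / y))
      = 1 / (1 - x ^ 2 / y) - 1 / (1 - x ^ 2 / y ^ 2) := by
    have h_ratio_ne : y ^ 2 / x ^ 2 ≠ 0 := by simp [hx, hy]
    have h_prod : y ^ 2 / x ^ 2 * (x ^ 2 / y) = y := by field_simp
    have h := one_sub_mul_div_mul_one_sub h_ratio_ne
      (mt eq_of_div_eq_one hxy.symm) (mt eq_of_div_eq_one h₂)
    rwa [h_prod, inv_div] at h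
  rw [h_H₂]
  linear_combination h_shift + x ^ (a + 2 * c) * y ^ b * h_frac

theorem H₃_recursion_general (hx : x ≠ 0) (hy : y ≠ 0) (hxy : x ^ 2 ≠ y ^ 2) (h₂ : x ^ 2 ≠ y)
    (h₃ : x ^ 3 ≠ y) (a b : ℤ) {c : ℤ} (hc : 0 ≤ c) :
    H₃ a b c x y
      = H₃ (a + 1) (b + 1) (c - 1) x y
        + (x * y) ^ c * H₂ (a + c) (b - c) x y
        + ∑ i ∈ Icc (0 : ℤ) (c - 1),
            (x * y) ^ (b + 2 * c - 2 * i) * x ^ (a - b - 2 * c + 4 * i) := by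
  rw [sum_Icc_mul_zpow_mul_zpow hx hy hxy a b hc]
  exact H₃_eq_H₃_shift_add hx hy hxy h₂ h₃ a b c

end Shift

theorem X_pow_ne_X_pow {σ R : Type*} [CommSemiring R] [Nontrivial R] {i j : σ} (hij : i ≠ j)
    {m : ℕ} (hm : m ≠ 0) (n : ℕ) :
    (MvPolynomial.X i : MvPolynomial σ R) ^ m ≠ MvPolynomial.X j ^ n := by
  rw [MvPolynomial.X_pow_eq_monomial, MvPolynomial.X_pow_eq_monomial, Ne,
    MvPolynomial.monomial_left_inj one_ne_zero, Finsupp.single_eq_single_iff]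
  tauto

theorem algebraMap_K_injective : Function.Injective (algebraMap (MvPolynomial (Fin 2) ℚ) K) :=
  IsFractionRing.injective _ _

theorem q_pow_ne_t_pow {m : ℕ} (hm : m ≠ 0) (n : ℕ) : q ^ m ≠ t ^ n := by
  rw [q, t, ← map_pow, ← map_pow]
  exact algebraMap_K_injective.ne (X_pow_ne_X_pow zero_ne_one hm n)

theorem H₃_recursion (a b c : ℤ) (hc : 0 ≤ c) :
    H₃ a b c q t
      = H₃ (a + 1) (b + 1) (c - 1) q t
        + (q * t) ^ c * H₂ (a + c) (b - c) q t
        + ∑ i ∈ Finset.Icc (0 : ℤ) (c - 1),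
            (q * t) ^ (b + 2 * c - 2 * i) * q ^ (a - b - 2 * c + 4 * i) := by
  have h_pow (m : ℕ) (hm : m ≠ 0) : q ^ m ≠ t := by simpa using q_pow_ne_t_pow hm 1
  exact H₃_recursion_general q_ne_zero t_ne_zero (q_pow_ne_t_pow two_ne_zero 2)
    (h_pow 2 two_ne_zero) (h_pow 3 three_ne_zero) a b hc
end
end

section
/- Let a, b be integers with b ≥ −1 and a ≥ b−1. Then F₂(a,b) = ∑_{i=0}^{b} ∑_{j=i}^{a+2b−2i} q^{j} t^{(a+2b−i)−j} in ℚ(q,t), where sums over empty integer ranges are zero. In particular F₂(a,b) is a polynomial in q and t with nonnegative integer coefficients. -/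
open Finset

noncomputable section

/-!
The two-term expression `xⁿyᵐ/(1 - y/x) + xᵐyⁿ/(1 - x/y)` is the geometric sum of the monomials
`xʲyᵐ⁺ⁿ⁻ʲ` with `m ≤ j ≤ n`. It occurs twice in `F₂`: `H₂(a,b;x,y)` is
`xᵃ` times the expression for the pair `(y, x²)` with exponents `0` and `b`, hence a sum of the
monomials `xᵃ⁺²ᵇ⁻²ⁱyⁱ`, and the symmetrization of each of these monomials is the expression for the
pair `(q, t)` with exponents `i` and `a + 2b - 2i`.
-/

theorem zpow_mem_of_nonneg {M S : Type*} [DivInvMonoid M] [SetLike S M] [SubmonoidClass S M]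
    {s : S} {x : M} (hx : x ∈ s) {n : ℤ} (hn : 0 ≤ n) : x ^ n ∈ s := by
  lift n to ℕ using hn
  simpa only [zpow_natCast] using pow_mem hx n

theorem mvPolynomial_X_pow_ne_X {σ R : Type*} [CommSemiring R] [Nontrivial R] (i j : σ) {n : ℕ}
    (hn : n ≠ 1) : (MvPolynomial.X i : MvPolynomial σ R) ^ n ≠ MvPolynomial.X j := by
  intro h
  apply hn
  simpa only [MvPolynomial.totalDegree_X_pow, MvPolynomial.totalDegree_X] using
    congrArg MvPolynomial.totalDegree h

-- The hypothesis stops at `n = m - 1`: below it the sum is still empty, but the right-hand side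
-- is no longer zero in general.
theorem sum_Icc_zpow_mul_zpow {L : Type*} [Field L] {x y : L} (hx : x ≠ 0) (hy : y ≠ 0)
    (hxy : x ≠ y) {m n : ℤ} (hmn : m - 1 ≤ n) :
    ∑ j ∈ Icc m n, x ^ j * y ^ (m + n - j)
      = x ^ n * y ^ m / (1 - y / x) + x ^ m * y ^ n / (1 - x / y) := by
  have hsub : x - y ≠ 0 := sub_ne_zero.mpr hxy
  have over_sub (k : ℤ) : x ^ k * y ^ m / (1 - y / x) + x ^ m * y ^ k / (1 - x / y)
      = (x ^ (k + 1) * y ^ m - x ^ m * y ^ (k + 1)) / (x - y) := by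
    rw [one_sub_div hx, one_sub_div hy, ← neg_sub x y, neg_div, div_neg, div_div_eq_mul_div,
      div_div_eq_mul_div, zpow_add_one₀ hx, zpow_add_one₀ hy]
    ring
  rw [over_sub]
  induction n, hmn using Int.leInduction with
  | base => simp
  | succ n hmn ih =>
    have sum_succ : ∑ j ∈ Icc m (n + 1), x ^ j * y ^ (m + (n + 1) - j)
        = x ^ (n + 1) * y ^ m + (∑ j ∈ Icc m n, x ^ j * y ^ (m + n - j)) * y := by
      rw [← insert_Icc_right_eq_Icc_add_one (by omega), sum_insert (by simp), sum_mul]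
      congr 1
      · rw [add_sub_cancel_right]
      · refine sum_congr rfl fun j _ ↦ ?_
        rw [mul_assoc, ← zpow_add_one₀ hy]
        congr 2
        ring
    rw [sum_succ, ih, zpow_add_one₀ hx (n + 1), zpow_add_one₀ hy (n + 1)]
    field_simp
    ring

theorem H₂_eq_sum {a b : ℤ} (hb : -1 ≤ b) {x y : K} (hx : x ≠ 0) (hy : y ≠ 0)
    (hxy : x ^ 2 ≠ y) :
    H₂ a b x y = ∑ i ∈ Icc 0 b, x ^ (a + 2 * b - 2 * i) * y ^ i := by
  have sq_zpow (k : ℤ) : (x ^ 2) ^ k = x ^ (2 * k) := by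
    rw [zpow_mul, zpow_ofNat]
  calc H₂ a b x y
      = x ^ a * (y ^ b * (x ^ 2) ^ (0 : ℤ) / (1 - x ^ 2 / y)
          + y ^ (0 : ℤ) * (x ^ 2) ^ b / (1 - y / x ^ 2)) := by
        rw [H₂, sq_zpow b, zpow_add₀ hx, zpow_zero, zpow_zero]
        ring
    _ = x ^ a * ∑ i ∈ Icc 0 b, y ^ i * (x ^ 2) ^ (0 + b - i) := by
        rw [sum_Icc_zpow_mul_zpow hy (pow_ne_zero 2 hx) hxy.symm (by omega)]
    _ = ∑ i ∈ Icc 0 b, x ^ (a + 2 * b - 2 * i) * y ^ i := by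
        rw [mul_sum]
        refine sum_congr rfl fun i _ ↦ ?_
        rw [sq_zpow, mul_left_comm, ← zpow_add₀ hx, mul_comm]
        congr 2
        ring

theorem H₂_symmetrization_eq_sum {a b : ℤ} (hb : -1 ≤ b) (hab : b - 1 ≤ a) {x y : K}
    (hx : x ≠ 0) (hy : y ≠ 0) (hxy : x ≠ y) (hx2 : x ^ 2 ≠ y) (hy2 : y ^ 2 ≠ x) :
    H₂ a b x y / (1 - y / x) + H₂ a b y x / (1 - x / y)
      = ∑ i ∈ Icc 0 b, ∑ j ∈ Icc i (a + 2 * b - 2 * i), x ^ j * y ^ (a + 2 * b - i - j) := by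
  rw [H₂_eq_sum hb hx hy hx2, H₂_eq_sum hb hy hx hy2, sum_div, sum_div, ← sum_add_distrib]
  refine sum_congr rfl fun i hi ↦ ?_
  have i_le_b : i ≤ b := (mem_Icc.mp hi).2
  rw [mul_comm (y ^ _) (x ^ i), ← sum_Icc_zpow_mul_zpow hx hy hxy (by omega)]
  refine sum_congr rfl fun j _ ↦ ?_
  congr 2
  ring

theorem q_ne_t : q ≠ t :=
  (IsFractionRing.injective _ K).ne (MvPolynomial.X_injective.ne zero_ne_one)

theorem q_sq_ne_t : q ^ 2 ≠ t := by
  rw [q, ← map_pow]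
  exact (IsFractionRing.injective _ K).ne (mvPolynomial_X_pow_ne_X 0 1 (by decide))

theorem t_sq_ne_q : t ^ 2 ≠ q := by
  rw [t, ← map_pow]
  exact (IsFractionRing.injective _ K).ne (mvPolynomial_X_pow_ne_X 1 0 (by decide))

/-- The subsemiring `ℕ[q,t]` of `ℚ(q,t)`: polynomials in `q` and `t` with nonnegative integer
coefficients, encoded as the image of `MvPolynomial (Fin 2) ℕ`. -/
def natPolynomials : Subsemiring K :=
  ((algebraMap (MvPolynomial (Fin 2) ℚ) K).comp
    (MvPolynomial.map (Nat.castRingHom ℚ))).rangeS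

theorem q_mem_natPolynomials : q ∈ natPolynomials :=
  ⟨MvPolynomial.X 0, by simp [q]⟩

theorem t_mem_natPolynomials : t ∈ natPolynomials :=
  ⟨MvPolynomial.X 1, by simp [t]⟩

theorem F₂_formula (a b : ℤ) (hb : -1 ≤ b) (hab : b - 1 ≤ a) :
    F₂ a b
      = (∑ i ∈ Finset.Icc (0 : ℤ) b, ∑ j ∈ Finset.Icc i (a + 2 * b - 2 * i),
          q ^ j * t ^ (a + 2 * b - i - j)) ∧
    ∃ p : MvPolynomial (Fin 2) ℕ,
      F₂ a b = algebraMap (MvPolynomial (Fin 2) ℚ) K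
        (MvPolynomial.map (Nat.castRingHom ℚ) p) := by
  have formula := H₂_symmetrization_eq_sum hb hab q_ne_zero t_ne_zero q_ne_t q_sq_ne_t t_sq_ne_q
  have mem_natPolynomials : F₂ a b ∈ natPolynomials := by
    rw [F₂, formula]
    refine sum_mem fun i hi ↦ sum_mem fun j hj ↦ ?_
    rw [mem_Icc] at hi hj
    exact mul_mem (zpow_mem_of_nonneg q_mem_natPolynomials (by omega))
      (zpow_mem_of_nonneg t_mem_natPolynomials (by omega))
  obtain ⟨p, hp⟩ := mem_natPolynomials
  exact ⟨formula, p, hp.symm⟩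
end
end

section
/- In ℚ(q,t) the following vanishing statements hold: F₁(−1) = 0; F₂(a,−1) = 0 for every integer a ≥ −2; and F₃(a,b,−1) = 0 for all integers a ≥ 1 and b ≥ 1. -/
open Finset

noncomputable section

/-!
Already `H₂(a,-1;x,y)` and `H₃(a,b,-1;x,y)` vanish, before symmetrization in `q` and `t`, because
`z⁻¹/(1 - y/z) = 1/(z - y)` is antisymmetric in `y` and `z`. With `z = x²` this cancels the two
terms of `H₂`, and with `z = x³` the first two terms of `H₃`. Over the common denominator
`(x - y)(x² - y²)(y - x²)` the other three terms of `H₃` have a numerator proportional to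
`x(1 - y) + (y - x²) - (x + y)(1 - x) = 0`.
-/

theorem zpow_add_ofNat_mul_neg_one {G₀ : Type*} [GroupWithZero G₀] {z : G₀} (hz : z ≠ 0) (m : ℤ)
    (n : ℕ) [n.AtLeastTwo] : z ^ (m + ofNat(n) * (-1)) = z ^ m * (z ^ (ofNat(n) : ℕ))⁻¹ := by
  rw [zpow_add₀ hz, zpow_mul, zpow_neg_one, zpow_ofNat]

section DivisionRing

variable {D : Type*} [DivisionRing D] {y z : D}

theorem inv_div_one_sub_div (hz : z ≠ 0) : z⁻¹ / (1 - y / z) = (z - y)⁻¹ := by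
  rw [one_sub_div hz, div_eq_mul_inv, ← mul_inv_rev, div_mul_cancel₀ _ hz]

theorem inv_div_one_sub_div_add_swap (hy : y ≠ 0) (hz : z ≠ 0) :
    z⁻¹ / (1 - y / z) + y⁻¹ / (1 - z / y) = 0 := by
  rw [inv_div_one_sub_div hz, inv_div_one_sub_div hy, ← neg_sub z y, inv_neg, add_neg_cancel]

end DivisionRing

theorem H₃_last_three_terms_sum_eq_zero {F : Type*} [Field F] {x y : F} (hx : x ≠ 0) (hy : y ≠ 0)
    (hsq : x ^ 2 ≠ y ^ 2) (hxy : x ^ 2 ≠ y) :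
    (x ^ 2)⁻¹ * (1 - y) / ((1 - y ^ 2 / x ^ 2) * (1 - x ^ 2 / y) * (1 - y / x))
      + (y ^ 2)⁻¹ / ((1 - x ^ 2 / y ^ 2) * (1 - x / y))
      + x⁻¹ * y⁻¹ * (1 - x) / ((1 - x ^ 2 / y) * (1 - x / y) * (1 - y / x)) = 0 := by
  have hsub_sq : x ^ 2 - y ^ 2 ≠ 0 := sub_ne_zero.mpr hsq
  have hadd_mul_sub : (x + y) * (x - y) ≠ 0 := sq_sub_sq x y ▸ hsub_sq
  have hadd : x + y ≠ 0 := left_ne_zero_of_mul hadd_mul_sub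
  have hsub : x - y ≠ 0 := right_ne_zero_of_mul hadd_mul_sub
  have hsub_sq_left : y - x ^ 2 ≠ 0 := sub_ne_zero.mpr hxy.symm
  have first : (x ^ 2)⁻¹ * (1 - y) / ((1 - y ^ 2 / x ^ 2) * (1 - x ^ 2 / y) * (1 - y / x))
      = y * (x * (1 - y)) / ((x - y) * (x ^ 2 - y ^ 2) * (y - x ^ 2)) := by
    rw [one_sub_div (pow_ne_zero 2 hx), one_sub_div hy, one_sub_div hx]
    field_simp
  have second : (y ^ 2)⁻¹ / ((1 - x ^ 2 / y ^ 2) * (1 - x / y))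
      = y * (y - x ^ 2) / ((x - y) * (x ^ 2 - y ^ 2) * (y - x ^ 2)) := by
    rw [one_sub_div (pow_ne_zero 2 hy), one_sub_div hy, ← neg_sub (x ^ 2) (y ^ 2), ← neg_sub x y]
    field_simp
  have third : x⁻¹ * y⁻¹ * (1 - x) / ((1 - x ^ 2 / y) * (1 - x / y) * (1 - y / x))
      = y * (-((x + y) * (1 - x))) / ((x - y) * (x ^ 2 - y ^ 2) * (y - x ^ 2)) := by
    rw [one_sub_div hy, one_sub_div hy, one_sub_div hx, ← neg_sub x y, sq_sub_sq]
    field_simp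
  have numerator : y * (x * (1 - y)) + y * (y - x ^ 2) + y * (-((x + y) * (1 - x))) = 0 := by ring
  rw [first, second, third, ← add_div, ← add_div, numerator, zero_div]

theorem H₂_neg_one (a : ℤ) {x y : K} (hx : x ≠ 0) (hy : y ≠ 0) : H₂ a (-1) x y = 0 := by
  rw [H₂, zpow_add_ofNat_mul_neg_one hx, zpow_neg_one, mul_div_assoc, mul_div_assoc, ← mul_add,
    inv_div_one_sub_div_add_swap hy (pow_ne_zero 2 hx), mul_zero]

theorem H₃_neg_one (a b : ℤ) {x y : K} (hx : x ≠ 0) (hy : y ≠ 0) (hsq : x ^ 2 ≠ y ^ 2)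
    (hxy : x ^ 2 ≠ y) : H₃ a b (-1) x y = 0 := by
  have factored : H₃ a b (-1) x y =
      x ^ (a + 2 * b) / (1 - y / x ^ 2) * ((x ^ 3)⁻¹ / (1 - y / x ^ 3) + y⁻¹ / (1 - x ^ 3 / y))
      + x ^ a * y ^ b *
        ((x ^ 2)⁻¹ * (1 - y) / ((1 - y ^ 2 / x ^ 2) * (1 - x ^ 2 / y) * (1 - y / x))
          + (y ^ 2)⁻¹ / ((1 - x ^ 2 / y ^ 2) * (1 - x / y))
          + x⁻¹ * y⁻¹ * (1 - x) / ((1 - x ^ 2 / y) * (1 - x / y) * (1 - y / x))) := by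
    simp only [H₃, zpow_add_ofNat_mul_neg_one hx, zpow_add_ofNat_mul_neg_one hy,
      zpow_add₀ hx a (-1), zpow_add₀ hy b (-1), zpow_neg_one, div_eq_mul_inv, mul_inv]
    ring
  rw [factored, inv_div_one_sub_div_add_swap hy (pow_ne_zero 3 hx),
    H₃_last_three_terms_sum_eq_zero hx hy hsq hxy, mul_zero, mul_zero, add_zero]

theorem F₁_neg_one : F₁ (-1) = 0 := by
  simp [F₁]

theorem F₂_neg_one (a : ℤ) : F₂ a (-1) = 0 := by
  rw [F₂, H₂_neg_one a q_ne_zero t_ne_zero, H₂_neg_one a t_ne_zero q_ne_zero, zero_div, zero_div,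
    add_zero]

theorem F₃_neg_one (a b : ℤ) : F₃ a b (-1) = 0 := by
  have q_sq_ne_t_sq : q ^ 2 ≠ t ^ 2 := q_pow_ne_t_pow two_ne_zero 2
  have q_sq_ne_t : q ^ 2 ≠ t := by simpa only [pow_one] using q_pow_ne_t_pow two_ne_zero 1
  have t_sq_ne_q : t ^ 2 ≠ q := by simpa only [pow_one] using (q_pow_ne_t_pow one_ne_zero 2).symm
  rw [F₃, H₃_neg_one a b q_ne_zero t_ne_zero q_sq_ne_t_sq q_sq_ne_t,
    H₃_neg_one a b t_ne_zero q_ne_zero q_sq_ne_t_sq.symm t_sq_ne_q, zero_div, zero_div, add_zero]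

theorem F_vanishing_general :
    F₁ (-1) = 0 ∧ (∀ a : ℤ, F₂ a (-1) = 0) ∧ (∀ a b : ℤ, F₃ a b (-1) = 0) :=
  ⟨F₁_neg_one, F₂_neg_one, F₃_neg_one⟩

theorem F_vanishing :
    F₁ (-1) = 0 ∧
    (∀ a : ℤ, -2 ≤ a → F₂ a (-1) = 0) ∧
    (∀ a b : ℤ, 1 ≤ a → 1 ≤ b → F₃ a b (-1) = 0) := by
  obtain ⟨h₁, h₂, h₃⟩ := F_vanishing_general
  exact ⟨h₁, fun a _ => h₂ a, fun a b _ _ => h₃ a b⟩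
end
end

section
/- Let a, b, c be nonnegative integers with a+1 ≥ b, a+1 ≥ c and b+1 ≥ c. Then in ℚ(q,t): F₃(a,b,c) = ∑_{(i,j) ∈ Q̃(a,b,c)} [i+ε_{ij}, A−2i−j]_{q,t}. In particular, F₃(a,b,c) is a polynomial in q and t with nonnegative integer coefficients. -/
open Finset

noncomputable section

/-- The symmetric chain `[k,ℓ]_{q,t} = ∑_{m=k}^{ℓ} q^m t^{k+ℓ−m}`. -/
def symChain (k l : ℤ) : K := ∑ m ∈ Finset.Icc k l, q ^ m * t ^ (k + l - m)

/-!
`H₃` is a closed form of a double geometric sum: it is the sum of `x ^ (A - 2i - j) * y ^ (i + ε)`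
over all `0 ≤ j ≤ c`, `j ≤ i ≤ b + c`, where row `j` is geometric with ratio `y / x ^ 2` up to
`i = b + c - j` and with ratio `y ^ 2 / x ^ 2` from there on. Symmetrizing in `q` and `t` turns
each monomial into the chain `[i + ε, A - 2i - j]`, with the convention `[l + 1, k - 1] = -[k, l]`
for reversed chains. Outside `Q̃` the chain depends only on `2i + j`, and the remaining tails of the
rows cancel under a reflection: each tail reversed onto itself when `a + b` is odd, onto the tail of
a neighbouring row when `a + b` is even. What is left is the sum over `Q̃`.
-/

theorem sum_Ico_of_ratio {F : Type*} [DivisionRing F] {r : F} (hr : r ≠ 1) {f : ℤ → F}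
    (hf : ∀ i, f (i + 1) = f i * r) {m n : ℤ} (hmn : m ≤ n) :
    ∑ i ∈ Ico m n, f i = (f m - f n) / (1 - r) := by
  have h : 1 - r ≠ 0 := sub_ne_zero.2 hr.symm
  induction n, hmn using Int.leInduction with
  | base => simp
  | succ n hn ih =>
    rw [← insert_Ico_right_eq_Ico_add_one hn, sum_insert right_notMem_Ico, ih, hf, eq_div_iff h,
      add_mul, div_mul_cancel₀ _ h]
    noncomm_ring

theorem sum_Ico_zpow_mul_zpow {F : Type*} [Field F] {x y r : F} (hx : x ≠ 0) (hy : y ≠ 0)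
    (hr : r ≠ 1) {u v : ℤ → ℤ} {d e : ℤ} (hu : ∀ i, u (i + 1) = u i + d)
    (hv : ∀ i, v (i + 1) = v i + e) (hde : x ^ d * y ^ e = r) {m n : ℤ} (hmn : m ≤ n) :
    ∑ i ∈ Ico m n, x ^ u i * y ^ v i = (x ^ u m * y ^ v m - x ^ u n * y ^ v n) / (1 - r) := by
  refine sum_Ico_of_ratio hr (fun i => ?_) hmn
  rw [hu, hv, zpow_add₀ hx, zpow_add₀ hy, ← hde, mul_mul_mul_comm]

/-- The lower end `i + ε_{ij}` of the chain at `p = (i, j)`. -/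
def chainBot (b c : ℤ) (p : ℤ × ℤ) : ℤ := p.1 + max 0 (p.1 + p.2 - b - c)

/-- The upper end `A - 2i - j` of the chain at `p = (i, j)`. -/
def chainTop (a b c : ℤ) (p : ℤ × ℤ) : ℤ := a + 2 * b + 3 * c - 2 * p.1 - p.2

/-- The index set of `H₃` as a double sum: `Q̃(a,b,c)` without the bound on `2i + 2j`. -/
def fullIndex (b c : ℤ) : Finset (ℤ × ℤ) :=
  (Icc 0 (b + c) ×ˢ Icc 0 c).filter fun p => p.2 ≤ p.1

theorem mem_fullIndex {b c : ℤ} {p : ℤ × ℤ} :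
    p ∈ fullIndex b c ↔ p.2 ∈ Ico 0 (c + 1) ∧ p.1 ∈ Ico p.2 (b + c + 1) := by
  simp only [fullIndex, mem_filter, mem_product, mem_Icc, mem_Ico]
  lia

theorem sum_fullIndex {M : Type*} [AddCommMonoid M] (b c : ℤ) (f : ℤ × ℤ → M) :
    ∑ p ∈ fullIndex b c, f p = ∑ j ∈ Ico 0 (c + 1), ∑ i ∈ Ico j (b + c + 1), f (i, j) :=
  sum_finset_product_right _ _ (fun j => Ico j (b + c + 1)) fun _ => mem_fullIndex

section MonomialSum

variable {F : Type*} [Field F] {x y : F} (hx : x ≠ 0) (hy : y ≠ 0)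
include hx hy

theorem sum_row_monomial (h₂₁ : y / x ^ 2 ≠ 1) (h₂₂ : y ^ 2 / x ^ 2 ≠ 1) (a : ℤ)
    {b c j : ℤ} (hj : 0 ≤ j) (hbc : 2 * j ≤ b + c + 1) :
    ∑ i ∈ Ico j (b + c + 1), x ^ chainTop a b c (i, j) * y ^ chainBot b c (i, j) =
      (x ^ (a + 2 * b + 3 * c - 3 * j) * y ^ j - x ^ (a + c - 2 + j) * y ^ (b + c + 1 - j)) /
          (1 - y / x ^ 2) +
        (x ^ (a + c - 2 + j) * y ^ (b + c + 2 - j) - x ^ (a + c - 2 - j) * y ^ (b + c + 2 + j)) /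
          (1 - y ^ 2 / x ^ 2) := by
  have hlow : ∑ i ∈ Ico j (b + c + 1 - j), x ^ chainTop a b c (i, j) * y ^ chainBot b c (i, j) =
      ∑ i ∈ Ico j (b + c + 1 - j), x ^ (a + 2 * b + 3 * c - j - 2 * i) * y ^ i :=
    sum_congr rfl fun i hi => by
      rw [mem_Ico] at hi
      congr 2 <;> simp only [chainTop, chainBot] <;> lia
  have hhigh : ∑ i ∈ Ico (b + c + 1 - j) (b + c + 1),
        x ^ chainTop a b c (i, j) * y ^ chainBot b c (i, j) =
      ∑ i ∈ Ico (b + c + 1 - j) (b + c + 1),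
        x ^ (a + 2 * b + 3 * c - j - 2 * i) * y ^ (j - b - c + 2 * i) :=
    sum_congr rfl fun i hi => by
      rw [mem_Ico] at hi
      congr 2 <;> simp only [chainTop, chainBot] <;> lia
  rw [← Ico_union_Ico_eq_Ico (b := b + c + 1 - j) (by lia) (by lia),
    sum_union (Ico_disjoint_Ico_consecutive _ _ _), hlow, hhigh,
    sum_Ico_zpow_mul_zpow hx hy h₂₁ (d := -2) (e := 1) (by lia) (by lia) (by field_simp) (by lia),
    sum_Ico_zpow_mul_zpow hx hy h₂₂ (d := -2) (e := 2) (by lia) (by lia) (by field_simp) (by lia)]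
  congr! 5 <;> lia

theorem sum_fullIndex_monomial (h₂₁ : y / x ^ 2 ≠ 1) (h₂₂ : y ^ 2 / x ^ 2 ≠ 1)
    (h₃₁ : y / x ^ 3 ≠ 1) (a : ℤ) {b c : ℤ} (hc : 0 ≤ c) (hbc : c ≤ b + 1) :
    ∑ p ∈ fullIndex b c, x ^ chainTop a b c p * y ^ chainBot b c p =
      ((x ^ (a + 2 * b + 3 * c) - x ^ (a + 2 * b - 3) * y ^ (c + 1)) / (1 - y / x ^ 3) -
          (x ^ (a + c - 2) * y ^ (b + c + 1) - x ^ (a + 2 * c - 1) * y ^ b) / (1 - x / y)) /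
          (1 - y / x ^ 2) +
        ((x ^ (a + c - 2) * y ^ (b + c + 2) - x ^ (a + 2 * c - 1) * y ^ (b + 1)) / (1 - x / y) -
          (x ^ (a + c - 2) * y ^ (b + c + 2) - x ^ (a - 3) * y ^ (b + 2 * c + 3)) / (1 - y / x)) /
          (1 - y ^ 2 / x ^ 2) := by
  have h₁₁ : y / x ≠ 1 := fun h => h₂₂ (by rw [← div_pow, h, one_pow])
  have h₁₁' : x / y ≠ 1 := by rwa [← inv_div, ne_eq, inv_eq_one]
  have hrow := fun j (hj : j ∈ Ico 0 (c + 1)) =>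
    sum_row_monomial hx hy h₂₁ h₂₂ a (b := b) (c := c) (mem_Ico.1 hj).1
      (by have := mem_Ico.1 hj; lia)
  rw [sum_fullIndex, sum_congr rfl hrow, sum_add_distrib,
    ← sum_div, ← sum_div, sum_sub_distrib, sum_sub_distrib,
    sum_Ico_zpow_mul_zpow hx hy h₃₁ (d := -3) (e := 1) (by lia) (by lia) (by field_simp) (by lia),
    sum_Ico_zpow_mul_zpow hx hy h₁₁' (d := 1) (e := -1) (by lia) (by lia) (by field_simp) (by lia),
    sum_Ico_zpow_mul_zpow hx hy h₁₁' (d := 1) (e := -1) (by lia) (by lia) (by field_simp) (by lia),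
    sum_Ico_zpow_mul_zpow hx hy h₁₁ (d := -1) (e := 1) (by lia) (by lia) (by field_simp) (by lia)]
  simp only [mul_zero, sub_zero, add_zero, zpow_zero, mul_one]
  congr! 6 <;> lia

end MonomialSum

theorem H₃_eq_sum_monomial {x y : K} (hx : x ≠ 0) (hy : y ≠ 0) (h₂₁ : x ^ 2 ≠ y)
    (h₂₂ : x ^ 2 ≠ y ^ 2) (h₃₁ : x ^ 3 ≠ y) (a : ℤ) {b c : ℤ} (hc : 0 ≤ c) (hbc : c ≤ b + 1) :
    H₃ a b c x y = ∑ p ∈ fullIndex b c, x ^ chainTop a b c p * y ^ chainBot b c p := by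
  have hsub {u v : K} (h : u ≠ v) : u - v ≠ 0 ∧ v - u ≠ 0 :=
    ⟨sub_ne_zero.2 h, sub_ne_zero.2 h.symm⟩
  obtain ⟨_, _⟩ := hsub (show x ≠ y from fun h => h₂₂ (congrArg (· ^ 2) h))
  obtain ⟨_, _⟩ := hsub h₂₁
  obtain ⟨_, _⟩ := hsub h₂₂
  obtain ⟨_, _⟩ := hsub h₃₁
  rw [sum_fullIndex_monomial hx hy (div_ne_one_of_ne h₂₁.symm) (div_ne_one_of_ne h₂₂.symm)
    (div_ne_one_of_ne h₃₁.symm) a hc hbc]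
  simp only [H₃, two_mul, show 3 * c = c + c + c by ring, zpow_add₀ hx, zpow_add₀ hy,
    zpow_sub₀ hx, zpow_ofNat]
  field_simp
  ring

/-- The closed form of the symmetric chain `[k, l]`, which continues it to `k > l + 1` as minus the
chain `[l + 1, k - 1]`. -/
def signedChain (k l : ℤ) : K := (q ^ (l + 1) * t ^ k - q ^ k * t ^ (l + 1)) / (q - t)

theorem signedChain_eq_symmetrization (k l : ℤ) :
    signedChain k l = q ^ l * t ^ k / (1 - t / q) + t ^ l * q ^ k / (1 - q / t) := by
  have := q_ne_zero
  have := t_ne_zero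
  have := sub_ne_zero.2 q_ne_t
  have := sub_ne_zero.2 q_ne_t.symm
  rw [signedChain, zpow_add_one₀ q_ne_zero, zpow_add_one₀ t_ne_zero]
  field_simp
  ring

theorem signedChain_reflect (k l : ℤ) : signedChain (l + 1) (k - 1) = -signedChain k l := by
  rw [signedChain, signedChain, sub_add_cancel]
  ring

theorem symChain_eq_signedChain {k l : ℤ} (h : k ≤ l + 1) : symChain k l = signedChain k l := by
  have hq := q_ne_zero
  have ht := t_ne_zero
  have := sub_ne_zero.2 q_ne_t
  have := sub_ne_zero.2 q_ne_t.symm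
  rw [symChain, ← Ico_add_one_right_eq_Icc, sum_Ico_zpow_mul_zpow hq ht
    (div_ne_one_of_ne q_ne_t) (d := 1) (e := -1) (by lia) (by lia) (by field_simp) h, signedChain,
    add_sub_cancel_left, show k + l - (l + 1) = k - 1 by ring, zpow_add_one₀ ht, zpow_sub_one₀ ht]
  field_simp
  ring

theorem F₃_eq_sum_signedChain (a : ℤ) {b c : ℤ} (hc : 0 ≤ c) (hbc : c ≤ b + 1) :
    F₃ a b c = ∑ p ∈ fullIndex b c, signedChain (chainBot b c p) (chainTop a b c p) := by
  rw [F₃,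
    H₃_eq_sum_monomial q_ne_zero t_ne_zero (by simpa using q_pow_ne_t_pow two_ne_zero 1)
      (q_pow_ne_t_pow two_ne_zero 2) (by simpa using q_pow_ne_t_pow three_ne_zero 1) a hc hbc,
    H₃_eq_sum_monomial t_ne_zero q_ne_zero (by simpa using (q_pow_ne_t_pow one_ne_zero 2).symm)
      (q_pow_ne_t_pow two_ne_zero 2).symm (by simpa using (q_pow_ne_t_pow one_ne_zero 3).symm)
      a hc hbc]
  simp only [signedChain_eq_symmetrization, sum_add_distrib, sum_div]

theorem mem_Qtilde {a b c : ℤ} {p : ℤ × ℤ} :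
    p ∈ Qtilde a b c ↔ (0 ≤ p.2 ∧ p.2 ≤ c) ∧ (p.2 ≤ p.1 ∧ p.1 ≤ b + c) ∧
      2 * p.1 + 2 * p.2 ≤ a + b + 2 * c - (c - p.2) % 2 := by
  simp only [Qtilde, mem_filter, mem_product, mem_Icc]
  lia

theorem Qtilde_subset_fullIndex (a b c : ℤ) : Qtilde a b c ⊆ fullIndex b c := by
  intro p hp
  rw [mem_Qtilde] at hp
  rw [mem_fullIndex, mem_Ico, mem_Ico]
  lia

/-- The least `i` with `(i, j)` beyond the bound on `2i + 2j` in `Q̃(a,b,c)`; the part of row `j` of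
`fullIndex b c` from there on is called its tail. -/
def tailStart (a b c j : ℤ) : ℤ := (a + b + 2 * c - (c - j) % 2) / 2 + 1 - j

/-- The row whose tail cancels the tail of row `j`: row `j` itself for `a + b` odd; for `a + b` even
the rows are paired as `{c, c - 1}`, `{c - 2, c - 3}`, and so on, and a row `0` left over has an
empty tail, provided `b ≤ a + 1`. -/
def rowPartner (a b c j : ℤ) : ℤ :=
  if (a + b) % 2 = 1 then j else if (c - j) % 2 = 1 then j + 1 else j - 1

theorem rowPartner_rowPartner (a b c j : ℤ) : rowPartner a b c (rowPartner a b c j) = j := by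
  unfold rowPartner
  split_ifs <;> lia

theorem tailStart_rowPartner (a b c j : ℤ) :
    tailStart a b c (rowPartner a b c j) = tailStart a b c j := by
  unfold tailStart rowPartner
  split_ifs <;> lia

theorem two_mul_tailStart_add (a b c j : ℤ) :
    2 * tailStart a b c j + j + rowPartner a b c j = a + b + 2 * c + 1 := by
  unfold tailStart rowPartner
  split_ifs <;> lia

theorem rowPartner_mem_Icc {a b c j : ℤ} (hab : b ≤ a + 1) (hj : j ∈ Icc 0 c)
    (hrow : tailStart a b c j ≤ b + c) : rowPartner a b c j ∈ Icc 0 c := by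
  rw [mem_Icc] at *
  unfold tailStart at hrow
  unfold rowPartner
  split_ifs <;> lia

theorem mem_fullIndex_sdiff_Qtilde {a b c : ℤ} (hac : c ≤ a + 1) (hbc : c ≤ b + 1)
    {p : ℤ × ℤ} :
    p ∈ fullIndex b c \ Qtilde a b c ↔
      p.2 ∈ Icc 0 c ∧ p.1 ∈ Icc (tailStart a b c p.2) (b + c) := by
  rw [mem_sdiff, mem_fullIndex, mem_Qtilde, mem_Icc, mem_Icc, mem_Ico, mem_Ico, tailStart]
  lia

theorem chainBot_eq_of_tailStart_le {a b c : ℤ} (hab : b ≤ a + 1) {p : ℤ × ℤ}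
    (hp : tailStart a b c p.2 ≤ p.1) : chainBot b c p = 2 * p.1 + p.2 - b - c := by
  rw [tailStart] at hp
  rw [chainBot]
  lia

/-- The sign-reversing involution on the tails: it reverses the interval of first coordinates while
passing from row `j` to its partner, whose tail has the same first coordinates. -/
def tailReflect (a b c : ℤ) (p : ℤ × ℤ) : ℤ × ℤ :=
  (tailStart a b c p.2 + (b + c) - p.1, rowPartner a b c p.2)

theorem tailReflect_tailReflect (a b c : ℤ) (p : ℤ × ℤ) :
    tailReflect a b c (tailReflect a b c p) = p := by
  simp [tailReflect, tailStart_rowPartner, rowPartner_rowPartner]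

theorem tailReflect_mem {a b c : ℤ} (hab : b ≤ a + 1) (hac : c ≤ a + 1) (hbc : c ≤ b + 1)
    {p : ℤ × ℤ} (hp : p ∈ fullIndex b c \ Qtilde a b c) :
    tailReflect a b c p ∈ fullIndex b c \ Qtilde a b c := by
  rw [mem_fullIndex_sdiff_Qtilde hac hbc] at hp ⊢
  have h := mem_Icc.1 hp.2
  refine ⟨rowPartner_mem_Icc hab hp.1 (h.1.trans h.2), ?_⟩
  rw [tailReflect, tailStart_rowPartner, mem_Icc]
  lia

theorem signedChain_tailReflect {a b c : ℤ} (hab : b ≤ a + 1) (hac : c ≤ a + 1)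
    (hbc : c ≤ b + 1) {p : ℤ × ℤ} (hp : p ∈ fullIndex b c \ Qtilde a b c) :
    signedChain (chainBot b c (tailReflect a b c p)) (chainTop a b c (tailReflect a b c p)) =
      -signedChain (chainBot b c p) (chainTop a b c p) := by
  have bot {p} (hp : p ∈ fullIndex b c \ Qtilde a b c) :=
    chainBot_eq_of_tailStart_le hab (mem_Icc.1 ((mem_fullIndex_sdiff_Qtilde hac hbc).1 hp).2).1
  have hsum := two_mul_tailStart_add a b c p.2
  rw [← signedChain_reflect, bot hp, bot (tailReflect_mem hab hac hbc hp)]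
  congr 1 <;> simp only [chainTop, tailReflect] <;> lia

theorem sum_signedChain_sdiff_Qtilde {a b c : ℤ} (hab : b ≤ a + 1) (hac : c ≤ a + 1)
    (hbc : c ≤ b + 1) :
    ∑ p ∈ fullIndex b c \ Qtilde a b c, signedChain (chainBot b c p) (chainTop a b c p) = 0 := by
  refine sum_involution (fun p _ => tailReflect a b c p) (fun p hp => ?_) (fun p hp hne heq => ?_)
    (fun p hp => tailReflect_mem hab hac hbc hp) fun p _ => tailReflect_tailReflect a b c p
  · rw [signedChain_tailReflect hab hac hbc hp, add_neg_cancel]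
  · have := signedChain_tailReflect hab hac hbc hp
    rw [heq] at this
    exact hne (self_eq_neg.1 this)

theorem chainBot_le_chainTop_add_one {a b c : ℤ} {p : ℤ × ℤ} (hp : p ∈ Qtilde a b c) :
    chainBot b c p ≤ chainTop a b c p + 1 := by
  rw [mem_Qtilde] at hp
  rw [chainBot, chainTop]
  lia

theorem F₃_eq_sum_symChain {a b c : ℤ} (hc : 0 ≤ c) (hab : b ≤ a + 1) (hac : c ≤ a + 1)
    (hbc : c ≤ b + 1) :
    F₃ a b c = ∑ p ∈ Qtilde a b c, symChain (chainBot b c p) (chainTop a b c p) := by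
  rw [F₃_eq_sum_signedChain a hc hbc, ← sum_sdiff (Qtilde_subset_fullIndex a b c),
    sum_signedChain_sdiff_Qtilde hab hac hbc, zero_add]
  exact sum_congr rfl fun p hp =>
    (symChain_eq_signedChain (chainBot_le_chainTop_add_one hp)).symm

/-- The inclusion `ℕ[q,t] → ℚ(q,t)`; membership in its range encodes being a polynomial with
nonnegative integer coefficients. -/
def natPolyToK : MvPolynomial (Fin 2) ℕ →+* K :=
  (algebraMap (MvPolynomial (Fin 2) ℚ) K).comp (MvPolynomial.map (Nat.castRingHom ℚ))

theorem symChain_mem_rangeS_natPolyToK {k : ℤ} (hk : 0 ≤ k) (l : ℤ) :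
    symChain k l ∈ natPolyToK.rangeS := by
  have hq : q ∈ natPolyToK.rangeS := ⟨MvPolynomial.X 0, by simp [natPolyToK, q]⟩
  have ht : t ∈ natPolyToK.rangeS := ⟨MvPolynomial.X 1, by simp [natPolyToK, t]⟩
  refine sum_mem fun m hm => ?_
  rw [mem_Icc] at hm
  lift m to ℕ using by lia
  obtain ⟨n, hn⟩ := Int.eq_ofNat_of_zero_le (show 0 ≤ k + l - m by lia)
  rw [hn, zpow_natCast, zpow_natCast]
  exact mul_mem (pow_mem hq m) (pow_mem ht n)

theorem F₃_symmetric_chains (a b c : ℤ) (ha : 0 ≤ a) (hb : 0 ≤ b) (hc : 0 ≤ c)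
    (hab : b ≤ a + 1) (hac : c ≤ a + 1) (hbc : c ≤ b + 1) :
    F₃ a b c
      = (∑ p ∈ Qtilde a b c,
          symChain (p.1 + max 0 (p.1 + p.2 - b - c))
            (a + 2 * b + 3 * c - 2 * p.1 - p.2)) ∧
    ∃ p : MvPolynomial (Fin 2) ℕ,
      F₃ a b c = algebraMap (MvPolynomial (Fin 2) ℚ) K
        (MvPolynomial.map (Nat.castRingHom ℚ) p) := by
  have hsum := F₃_eq_sum_symChain hc hab hac hbc
  have hmem : F₃ a b c ∈ natPolyToK.rangeS := by
    rw [hsum]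
    refine sum_mem fun p hp => symChain_mem_rangeS_natPolyToK ?_ _
    have := mem_Qtilde.1 hp
    rw [chainBot]
    lia
  obtain ⟨p, hp⟩ := hmem
  exact ⟨hsum, p, hp.symm⟩
end
end
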